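/- Let M be a reduced G_C-perfect R-module of G_C-dimension n, and assume Tor_1^R(Tr(M), C) = 0. Then G_C-dim_R(M) + G_C-dim_R(λM ⊗_R C) = G_C-dim_R(Ext_R^n(M,C)) (as an equality in ℕ ∪ {∞}). -/

import Mathlib

open CategoryTheory TensorProduct

noncomputable section

universe u

variable (R : Type u) [CommRing R]

/-- The `i`-th Ext module `Ext_R^i(M, N)`. -/
def ExtM (M N : ModuleCat.{u} R) (i : ℕ) : ModuleCat.{u} R :=
  ((Ext R (ModuleCat.{u} R) i).obj (Opposite.op M)).obj N

/-- The `i`-th Tor module `Tor_i^R(M, N)`. -/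
def TorM (M N : ModuleCat.{u} R) (i : ℕ) : ModuleCat.{u} R :=
  ((Tor (ModuleCat.{u} R) i).obj M).obj N

/-- The biduality (evaluation) map `M → Hom_R(Hom_R(M, C), C)`. -/
def bidualityMap (C M : ModuleCat.{u} R) :
    ↥M →ₗ[R] ((↥M →ₗ[R] ↥C) →ₗ[R] ↥C) :=
  (LinearMap.id : (↥M →ₗ[R] ↥C) →ₗ[R] (↥M →ₗ[R] ↥C)).flip

/-- `C` is a semidualizing `R`-module. -/
def IsSemidualizing (C : ModuleCat.{u} R) : Prop :=
  Module.Finite R ↥C ∧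
  Function.Bijective (fun r : R => (r • LinearMap.id : ↥C →ₗ[R] ↥C)) ∧
  ∀ i : ℕ, 0 < i → Subsingleton (ExtM R C C i)

/-- `M` is totally `C`-reflexive. -/
def IsTotallyCReflexive (C M : ModuleCat.{u} R) : Prop :=
  Module.Finite R ↥M ∧
  Function.Bijective (bidualityMap R C M) ∧
  (∀ i : ℕ, 0 < i → Subsingleton (ExtM R M C i)) ∧
  (∀ i : ℕ, 0 < i → Subsingleton (ExtM R (ModuleCat.of R (↥M →ₗ[R] ↥C)) C i))

/-- `G_C`-dimension of `M` is at most `n`: there is an exact sequence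
`0 → X_n → ⋯ → X_0 → M → 0` with each `X_i` totally `C`-reflexive. -/
def gcdimLE (C : ModuleCat.{u} R) : ℕ → ModuleCat.{u} R → Prop
  | 0, M => IsTotallyCReflexive R C M
  | n+1, M => ∃ (X K : ModuleCat.{u} R) (f : ↥K →ₗ[R] ↥X) (g : ↥X →ₗ[R] ↥M),
      Function.Injective f ∧ Function.Surjective g ∧
      LinearMap.ker g = LinearMap.range f ∧
      IsTotallyCReflexive R C X ∧ gcdimLE C n K

/-- The `G_C`-dimension of `M`, as an element of `ℕ∞`. -/
def gcdim (C M : ModuleCat.{u} R) : ℕ∞ :=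
  sInf ((fun n : ℕ => (n : ℕ∞)) '' {n | gcdimLE R C n M})

/-- `grade_R(M) = inf { i | Ext_R^i(M, R) ≠ 0 }`, with `grade 0 = ∞`. -/
def gradeR (M : ModuleCat.{u} R) : ℕ∞ :=
  sInf ((fun i : ℕ => (i : ℕ∞)) ''
    {i | ¬ Subsingleton (ExtM R M (ModuleCat.of R R) i)})

/-- Reduced grade of `M` with respect to `C`. -/
def rgrade (C M : ModuleCat.{u} R) : ℕ∞ :=
  sInf ((fun i : ℕ => (i : ℕ∞)) ''
    {i | 0 < i ∧ ¬ Subsingleton (ExtM R M C i)})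

/-- `M` is reduced `G_C`-perfect. -/
def IsReducedGCPerfect (C M : ModuleCat.{u} R) : Prop :=
  gcdim R C M ≠ ⊤ ∧ rgrade R C M = gcdim R C M

/-- `M` is `G_C`-perfect. -/
def IsGCPerfect (C M : ModuleCat.{u} R) : Prop :=
  gcdim R C M ≠ ⊤ ∧ gradeR R M = gcdim R C M

/-- `π : P → M` is a projective cover: `P` projective, `π` surjective with superfluous kernel. -/
def IsProjectiveCover {P M : ModuleCat.{u} R} (π : ↥P →ₗ[R] ↥M) : Prop :=
  Module.Projective R ↥P ∧ Function.Surjective π ∧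
  ∀ N : Submodule R ↥P, N ⊔ LinearMap.ker π = ⊤ → N = ⊤

/-- `P₁ →d P₀ →π M → 0` is a minimal projective presentation of `M`. -/
def IsMinimalPresentation {P1 P0 M : ModuleCat.{u} R}
    (d : ↥P1 →ₗ[R] ↥P0) (π : ↥P0 →ₗ[R] ↥M) : Prop :=
  Module.Finite R ↥P1 ∧ Module.Finite R ↥P0 ∧
  IsProjectiveCover R π ∧
  LinearMap.range d = LinearMap.ker π ∧
  Module.Projective R ↥P1 ∧
  ∀ N : Submodule R ↥P1, N ⊔ LinearMap.ker d = ⊤ → N = ⊤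

/-- `T` is (a module isomorphic to) the transpose `Tr_C(M)` of `M` with respect to `C`,
computed from a minimal projective presentation of `M`. -/
def IsTransposeC (C M T : ModuleCat.{u} R) : Prop :=
  ∃ (P1 P0 : ModuleCat.{u} R) (d : ↥P1 →ₗ[R] ↥P0) (π : ↥P0 →ₗ[R] ↥M),
    IsMinimalPresentation R d π ∧
    Nonempty (↥T ≃ₗ[R]
      ((↥P1 →ₗ[R] ↥C) ⧸ LinearMap.range (LinearMap.lcomp R ↥C d)))

/-- `T` is the usual Auslander transpose `Tr(M) = Tr_R(M)`. -/
def IsTranspose (M T : ModuleCat.{u} R) : Prop :=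
  IsTransposeC R (ModuleCat.of R R) M T

/-- `S` is (a module isomorphic to) the first syzygy `Ω N`, i.e. the kernel of a
projective cover of `N`. -/
def IsSyzygyOf (N S : ModuleCat.{u} R) : Prop :=
  ∃ (P : ModuleCat.{u} R) (π : ↥P →ₗ[R] ↥N),
    Module.Finite R ↥P ∧ IsProjectiveCover R π ∧
    Nonempty (↥S ≃ₗ[R] LinearMap.ker π)

/-- `S` is (a module isomorphic to) the `n`-th syzygy `Ωⁿ M`. -/
def IsNthSyzygy : ℕ → ModuleCat.{u} R → ModuleCat.{u} R → Prop
  | 0, M, S => Nonempty (↥S ≃ₗ[R] ↥M)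
  | n+1, M, S => ∃ K : ModuleCat.{u} R, IsNthSyzygy n M K ∧ IsSyzygyOf R K S

/-- `L` is (a module isomorphic to) `λ M = Ω Tr M`. -/
def IsLambda (M L : ModuleCat.{u} R) : Prop :=
  ∃ T : ModuleCat.{u} R, IsTranspose R M T ∧ IsSyzygyOf R T L

/-- `M` is horizontally linked, i.e. `M ≅ λλM`. -/
def IsHorizontallyLinked (M : ModuleCat.{u} R) : Prop :=
  ∃ L L2 : ModuleCat.{u} R, IsLambda R M L ∧ IsLambda R L L2 ∧
    Nonempty (↥M ≃ₗ[R] ↥L2)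

/-- `M` is stable: it has no non-zero projective direct summand. -/
def IsStable (M : ModuleCat.{u} R) : Prop :=
  ∀ (P N : ModuleCat.{u} R), Module.Projective R ↥P →
    Nonempty (↥M ≃ₗ[R] (↥P × ↥N)) → Subsingleton ↥P

/-- `N` belongs to the Auslander class `A_C`. -/
def MemAuslanderClass (C N : ModuleCat.{u} R) : Prop :=
  Function.Bijective (TensorProduct.mk R ↥N ↥C) ∧
  (∀ i : ℕ, 0 < i → Subsingleton (TorM R C N i)) ∧
  (∀ i : ℕ, 0 < i → Subsingleton
    (ExtM R C (ModuleCat.of R (↥N ⊗[R] ↥C)) i))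

/-- `R` is semiperfect: every finite `R`-module has a projective cover. -/
def IsSemiperfectRing : Prop :=
  ∀ M : ModuleCat.{u} R, Module.Finite R ↥M →
    ∃ (P : ModuleCat.{u} R) (π : ↥P →ₗ[R] ↥M),
      Module.Finite R ↥P ∧ IsProjectiveCover R π

/-- Depth over a local ring, via Ext from the residue field. -/
def rdepth [IsLocalRing R] (M : ModuleCat.{u} R) : ℕ∞ :=
  sInf ((fun i : ℕ => (i : ℕ∞)) ''
    {i | ¬ Subsingleton
      (ExtM R (ModuleCat.of R (IsLocalRing.ResidueField R)) M i)})

/-- Projective dimension at most `n`. -/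
def pdimLE : ℕ → ModuleCat.{u} R → Prop
  | 0, M => Module.Projective R ↥M
  | n+1, M => ∃ (X K : ModuleCat.{u} R) (f : ↥K →ₗ[R] ↥X) (g : ↥X →ₗ[R] ↥M),
      Function.Injective f ∧ Function.Surjective g ∧
      LinearMap.ker g = LinearMap.range f ∧
      Module.Projective R ↥X ∧ pdimLE n K

/-- Projective dimension, as an element of `ℕ∞`. -/
def pdim (M : ModuleCat.{u} R) : ℕ∞ :=
  sInf ((fun n : ℕ => (n : ℕ∞)) '' {n | pdimLE R n M})

/-- `M` is `C`-`k`-torsionless. -/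
def IsCkTorsionless (C M : ModuleCat.{u} R) (k : ℕ) : Prop :=
  k = 0 ∨ ∀ T : ModuleCat.{u} R, IsTransposeC R C M T →
    ∀ i : ℕ, 1 ≤ i → i ≤ k → Subsingleton (ExtM R T C i)

/-- `M` is a `C`-syzygy: it embeds into `P ⊗_R C` with `P` finite projective. -/
def IsCSyzygy (C M : ModuleCat.{u} R) : Prop :=
  ∃ (P : ModuleCat.{u} R), Module.Finite R ↥P ∧ Module.Projective R ↥P ∧
    ∃ f : ↥M →ₗ[R] (↥P ⊗[R] ↥C), Function.Injective f


/-- There is an exact sequence `0 → N → X_k → ⋯ → X_1 → M → 0` of finite `R`-modules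
with `Ext_R^i(X_j, C) = 0` for all `i > 0` and all `j`. -/
def ExtVanishingChain (C : ModuleCat.{u} R) : ℕ → ModuleCat.{u} R → ModuleCat.{u} R → Prop
  | 0, N, M => Nonempty (↥N ≃ₗ[R] ↥M)
  | k+1, N, M => ∃ (X K : ModuleCat.{u} R) (f : ↥K →ₗ[R] ↥X) (g : ↥X →ₗ[R] ↥M),
      Function.Injective f ∧ Function.Surjective g ∧
      LinearMap.ker g = LinearMap.range f ∧
      Module.Finite R ↥X ∧ (∀ i : ℕ, 0 < i → Subsingleton (ExtM R X C i)) ∧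
      ExtVanishingChain C k N K


section helpers
variable {R}

theorem extM_equiv_aux (M N : ModuleCat.{u} R) (i : ℕ) :
    Nonempty (ExtM R M N (i+1) ≃ₗ[R] Abelian.Ext M N (i+1)) := by
  let P := ProjectiveResolution.of M
  let K := P.complex.linearYonedaObj R N
  let S := K.sc' i (i+1) (i+2)
  have e1 : ExtM R M N (i+1) ≅ K.homology (i+1) := P.isoExt (i+1) N
  have e2 : K.homology (i+1) ≅ S.homology :=
    ShortComplex.homologyMapIso (K.isoSc' i (i+1) (i+2) (by simp) (by simp))
  have e3 := S.moduleCatHomologyIso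
  have E := (e1 ≪≫ e2 ≪≫ e3).toLinearEquiv
  have hcyc : ∀ x : ↥(LinearMap.ker S.g.hom), P.complex.d (i+2) (i+1) ≫
      (show P.complex.X (i+1) ⟶ N from x.1) = 0 := fun x => x.2
  let φ : ↥(LinearMap.ker S.g.hom) →ₗ[R] Abelian.Ext M N (i+1) :=
    { toFun := fun x => P.extMk (show P.complex.X (i+1) ⟶ N from x.1) (i+2) rfl (hcyc x)
      map_add' := fun x y => by
        rw [P.add_extMk]; rfl
      map_smul' := fun r x => by
        rw [RingHom.id_apply, Abelian.Ext.smul_eq_comp_mk₀, P.extMk_comp_mk₀]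
        congr 1 }
  have hφ : Function.Surjective φ := by
    intro a
    obtain ⟨f, hf, h⟩ := P.extMk_surjective a (i+2) rfl
    exact ⟨⟨f, hf⟩, h⟩
  have hk : LinearMap.ker φ = LinearMap.range S.moduleCatToCycles := by
    ext x
    rw [LinearMap.mem_ker]
    change P.extMk (show P.complex.X (i+1) ⟶ N from x.1) (i+2) rfl (hcyc x) = 0 ↔ _
    rw [P.extMk_eq_zero_iff _ _ _ _ i rfl]
    constructor
    · rintro ⟨g, hg⟩
      exact ⟨g, Subtype.ext hg⟩
    · rintro ⟨g, hg⟩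
      exact ⟨g, congrArg Subtype.val hg⟩
  exact ⟨E ≪≫ₗ (Submodule.quotEquivOfEq _ _ hk.symm) ≪≫ₗ φ.quotKerEquivOfSurjective hφ⟩

def extMEquiv (M N : ModuleCat.{u} R) (i : ℕ) :
    ExtM R M N (i+1) ≃ₗ[R] Abelian.Ext M N (i+1) := (extM_equiv_aux M N i).some

end helpers

section helpers
variable {R}

/-- Short exact sequences of modules, elementwise. -/
structure SES {A B D : ModuleCat.{u} R} (f : ↥A →ₗ[R] ↥B) (g : ↥B →ₗ[R] ↥D) : Prop where
  inj : Function.Injective f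
  surj : Function.Surjective g
  ex : LinearMap.ker g = LinearMap.range f

/-- `Ext^i(A, C) = 0`. -/
def EZ (C A : ModuleCat.{u} R) (i : ℕ) : Prop := Subsingleton (ExtM R A C i)

theorem EZ_iff {C A : ModuleCat.{u} R} {i : ℕ} : EZ C A (i+1) ↔ Subsingleton (Abelian.Ext A C (i+1)) :=
  (extMEquiv A C i).toEquiv.subsingleton_congr

theorem EZ_of_proj (C A : ModuleCat.{u} R) [Module.Projective R A] (i : ℕ) : EZ C A (i+1) := by
  rw [EZ_iff]
  have : Projective A := (IsProjective.iff_projective A).1 inferInstance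
  exact ⟨fun a b => by rw [a.eq_zero_of_projective, b.eq_zero_of_projective]⟩

variable {A B D : ModuleCat.{u} R} {f : ↥A →ₗ[R] ↥B} {g : ↥B →ₗ[R] ↥D}

theorem SES.comp (h : SES f g) (x : A) : g (f x) = 0 := by
  have : f x ∈ LinearMap.ker g := h.ex ▸ ⟨x, rfl⟩
  exact this

theorem SES.exists_of (h : SES f g) {y : B} (hy : g y = 0) : ∃ x, f x = y := by
  have : y ∈ LinearMap.ker g := hy
  rw [h.ex] at this
  exact this

theorem SES.zero (h : SES f g) : ModuleCat.ofHom f ≫ ModuleCat.ofHom g = 0 := by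
  ext x
  exact h.comp x

theorem SES.short (h : SES f g) : (ShortComplex.mk _ _ h.zero).ShortExact := by
  have : Mono (ModuleCat.ofHom f) := (ModuleCat.mono_iff_injective _).2 h.inj
  have : Epi (ModuleCat.ofHom g) := (ModuleCat.epi_iff_surjective _).2 h.surj
  refine ShortComplex.ShortExact.mk' ?_ ‹_› this
  rw [ShortComplex.moduleCat_exact_iff_range_eq_ker]
  exact h.ex.symm

variable {C : ModuleCat.{u} R}

theorem SES.ez_mid (h : SES f g) {i : ℕ} (hA : EZ C A (i+1)) (hD : EZ C D (i+1)) : EZ C B (i+1) := by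
  rw [EZ_iff] at *
  refine subsingleton_of_forall_eq 0 fun x => ?_
  obtain ⟨y, hy⟩ := Abelian.Ext.contravariant_sequence_exact₂ h.short C x (Subsingleton.elim _ _)
  rw [← hy, Subsingleton.elim y 0]; simp

theorem SES.ez_left (h : SES f g) {i : ℕ} (hB : EZ C B (i+1)) (hD : EZ C D (i+2)) : EZ C A (i+1) := by
  rw [EZ_iff] at *
  refine subsingleton_of_forall_eq 0 fun x => ?_
  obtain ⟨y, hy⟩ := Abelian.Ext.contravariant_sequence_exact₁ h.short C x (n₁ := i + 2) (by omega)
    (Subsingleton.elim _ _)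
  rw [← hy, Subsingleton.elim y 0]; simp

theorem SES.ez_right (h : SES f g) {i : ℕ} (hA : EZ C A (i+1)) (hB : EZ C B (i+2)) : EZ C D (i+2) := by
  rw [EZ_iff] at *
  refine subsingleton_of_forall_eq 0 fun x => ?_
  obtain ⟨y, hy⟩ := Abelian.Ext.contravariant_sequence_exact₃ h.short C x 
    (Subsingleton.elim _ _) (n₀ := i + 1) (by omega)
  rw [← hy, Subsingleton.elim y 0]; simp

/-- The connecting map. -/
def SES.conn (h : SES f g) (C : ModuleCat.{u} R) (i j : ℕ) (hj : 1 + i = j) :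
    Abelian.Ext A C i →ₗ[R] Abelian.Ext D C j :=
  Abelian.Ext.bilinearCompOfLinear R D A C 1 i j hj h.short.extClass

theorem SES.conn_apply (h : SES f g) (C : ModuleCat.{u} R) (i j : ℕ) (hj : 1 + i = j)
    (x : Abelian.Ext A C i) : h.conn C i j hj x = h.short.extClass.comp x hj := rfl

theorem SES.conn_surj (h : SES f g) (i : ℕ) (hB : EZ C B (i+1)) :
    Function.Surjective (h.conn C i (i+1) (by omega)) := by
  rw [EZ_iff] at hB
  intro x
  exact Abelian.Ext.contravariant_sequence_exact₃ h.short C x (Subsingleton.elim _ _) (n₀ := i) (by omega)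

theorem SES.shift (h : SES f g) (i : ℕ) (hB : EZ C B (i+1)) (hB' : EZ C B (i+2)) :
    Nonempty (ExtM R A C (i+1) ≃ₗ[R] ExtM R D C (i+2)) := by
  have hs := h.conn_surj (i+1) hB'
  have hi : Function.Injective (h.conn C (i+1) (i+2) (by omega)) := by
    rw [EZ_iff] at hB
    rw [← LinearMap.ker_eq_bot, LinearMap.ker_eq_bot']
    intro x hx
    obtain ⟨y, hy⟩ := Abelian.Ext.contravariant_sequence_exact₁ h.short C x (n₁ := i + 2) (by omega) hx
    rw [← hy, Subsingleton.elim y 0]; simp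
  exact ⟨extMEquiv A C i ≪≫ₗ LinearEquiv.ofBijective _ ⟨hi, hs⟩ ≪≫ₗ (extMEquiv D C (i+1)).symm⟩

theorem SES.coker (h : SES f g) (hB : EZ C B 1) :
    Nonempty (((↥A →ₗ[R] ↥C) ⧸ LinearMap.range (LinearMap.lcomp R ↥C f)) ≃ₗ[R] ExtM R D C 1) := by
  have hs := h.conn_surj 0 hB
  let e : (↥A →ₗ[R] ↥C) ≃ₗ[R] Abelian.Ext A C 0 :=
    (ModuleCat.homLinearEquiv (S := R)).symm ≪≫ₗ (Abelian.Ext.linearEquiv₀ (R := R)).symm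
  have he : ∀ q, e q = Abelian.Ext.mk₀ (ModuleCat.ofHom q) := fun q => rfl
  let φ := h.conn C 0 1 (by omega) ∘ₗ e.toLinearMap
  have hφ : Function.Surjective φ := hs.comp e.surjective
  have hk : LinearMap.ker φ = LinearMap.range (LinearMap.lcomp R ↥C f) := by
    ext q
    rw [LinearMap.mem_ker]
    change h.short.extClass.comp (e q) (add_zero 1) = 0 ↔ _
    rw [he]
    constructor
    · intro hx
      obtain ⟨y, hy⟩ := Abelian.Ext.contravariant_sequence_exact₁ h.short C _ (n₁ := 1) (by omega) hx
      obtain ⟨y, rfl⟩ := (Abelian.Ext.mk₀_bijective _ _).2 y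
      rw [Abelian.Ext.mk₀_comp_mk₀] at hy
      have := (Abelian.Ext.mk₀_bijective _ _).1 hy
      refine ⟨y.hom, ?_⟩
      have h2 := congrArg ModuleCat.Hom.hom this
      exact h2
    · rintro ⟨y, rfl⟩
      have : ModuleCat.ofHom (LinearMap.lcomp R ↥C f y) = ModuleCat.ofHom f ≫ ModuleCat.ofHom y := rfl
      rw [this, ← Abelian.Ext.mk₀_comp_mk₀]
      exact h.short.extClass_comp_assoc _
  exact ⟨Submodule.quotEquivOfEq _ _ hk.symm ≪≫ₗ φ.quotKerEquivOfSurjective hφ ≪≫ₗ (extMEquiv D C 0).symm⟩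

theorem SES.dual_surj (h : SES f g) (hD : EZ C D 1) :
    Function.Surjective (LinearMap.lcomp R ↥C f) := by
  rw [EZ_iff] at hD
  intro q
  obtain ⟨y, hy⟩ := Abelian.Ext.contravariant_sequence_exact₁ h.short C 
    (Abelian.Ext.mk₀ (ModuleCat.ofHom q)) (n₁ := 1) (by omega) (Subsingleton.elim _ _)
  obtain ⟨y, rfl⟩ := (Abelian.Ext.mk₀_bijective _ _).2 y
  rw [Abelian.Ext.mk₀_comp_mk₀] at hy
  have := (Abelian.Ext.mk₀_bijective _ _).1 hy
  refine ⟨y.hom, ?_⟩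
  have h2 := congrArg ModuleCat.Hom.hom this
  exact h2

theorem SES.ez_one (h : SES f g) (hB : EZ C B 1) 
    (hs : Function.Surjective (LinearMap.lcomp R ↥C f)) : EZ C D 1 := by
  obtain ⟨e⟩ := h.coker hB
  have : Subsingleton ((↥A →ₗ[R] ↥C) ⧸ LinearMap.range (LinearMap.lcomp R ↥C f)) := by
    rw [LinearMap.range_eq_top.2 hs]
    infer_instance
  exact e.symm.toEquiv.subsingleton

theorem EZ_retract {A B : ModuleCat.{u} R} (i : ↥A →ₗ[R] ↥B) (r : ↥B →ₗ[R] ↥A)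
    (h : r ∘ₗ i = LinearMap.id) {n : ℕ} (hB : EZ C B n) : EZ C A n := by
  let F := (Ext R (ModuleCat.{u} R) n).flip.obj C
  have h1 : ModuleCat.ofHom i ≫ ModuleCat.ofHom r = 𝟙 A := by
    ext x; exact LinearMap.congr_fun h x
  have h2 : F.map (ModuleCat.ofHom r).op ≫ F.map (ModuleCat.ofHom i).op = 𝟙 _ := by
    rw [← F.map_comp, ← op_comp, h1, op_id, F.map_id]
  have hB' : Subsingleton (F.obj (Opposite.op B)) := hB
  change Subsingleton (F.obj (Opposite.op A))
  refine subsingleton_of_forall_eq 0 fun x => ?_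
  have h3 := congrArg (fun q => q.hom x) h2
  simp at h3
  rw [← h3, Subsingleton.elim ((F.map (ModuleCat.ofHom r).op).hom x) 0, map_zero]

theorem EZ_congr {A B : ModuleCat.{u} R} (e : ↥A ≃ₗ[R] ↥B) {n : ℕ} (hB : EZ C B n) : EZ C A n :=
  EZ_retract e.toLinearMap e.symm.toLinearMap (by ext; simp) hB

end helpers

section helpers
variable {R}
variable {C : ModuleCat.{u} R} {A B D : ModuleCat.{u} R} {f : ↥A →ₗ[R] ↥B} {g : ↥B →ₗ[R] ↥D}

/-- The dual `Hom(A, C)`. -/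
abbrev dl (C A : ModuleCat.{u} R) : ModuleCat.{u} R := ModuleCat.of R (↥A →ₗ[R] ↥C)

/-- The dual map. -/
abbrev dlm (C : ModuleCat.{u} R) {A B : ModuleCat.{u} R} (f : ↥A →ₗ[R] ↥B) : ↥(dl C B) →ₗ[R] ↥(dl C A) :=
  LinearMap.lcomp R ↥C f

theorem bid_nat (f : ↥A →ₗ[R] ↥B) (x : A) :
    bidualityMap R C B (f x) = dlm C (dlm C f) (bidualityMap R C A x) := rfl

theorem bid_dual (φ : dl C A) :
    dlm C (A := A) (B := dl C (dl C A)) (bidualityMap R C A) (bidualityMap R C (dl C A) φ) = φ := rfl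

theorem SES.dual (h : SES f g) (hs : Function.Surjective (dlm C f)) : SES (dlm C g) (dlm C f) where
  inj := fun a b hab => by
    ext x
    obtain ⟨y, rfl⟩ := h.surj x
    exact LinearMap.congr_fun hab y
  surj := hs
  ex := by
    ext φ
    constructor
    · intro hφ
      have hφ' : ∀ x, φ (f x) = 0 := fun x => LinearMap.congr_fun hφ x
      have hle : LinearMap.ker g ≤ LinearMap.ker φ := by
        rw [h.ex]; rintro _ ⟨x, rfl⟩; exact hφ' x
      have hz : ∀ y, φ y = φ (Function.surjInv h.surj (g y)) := by
        intro y
        have : y - Function.surjInv h.surj (g y) ∈ LinearMap.ker φ := by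
          apply hle
          simp [Function.surjInv_eq]
        rw [LinearMap.mem_ker, map_sub, sub_eq_zero] at this
        exact this
      refine ⟨(LinearMap.ker g).liftQ φ hle ∘ₗ (g.quotKerEquivOfSurjective h.surj).symm.toLinearMap, ?_⟩
      ext y
      simp only [LinearMap.lcomp_apply, LinearMap.comp_apply, LinearEquiv.coe_coe]
      have : (g.quotKerEquivOfSurjective h.surj).symm (g y) = Submodule.Quotient.mk y := by
        rw [LinearEquiv.symm_apply_eq]; rfl
      rw [this]; rfl
    · rintro ⟨ψ, rfl⟩
      rw [LinearMap.mem_ker]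
      ext x
      simp [h.comp]

/-- Bijectivity of biduality: the middle term. -/
theorem SES.bid_mid (h : SES f g) (hs : Function.Surjective (dlm C f))
    (hA : Function.Bijective (bidualityMap R C A)) (hD : Function.Bijective (bidualityMap R C D)) :
    Function.Bijective (bidualityMap R C B) := by
  have hinj := (h.dual hs)
  constructor
  · rw [← LinearMap.ker_eq_bot, LinearMap.ker_eq_bot']
    intro y hy
    have h1 : g y = 0 := by
      apply hD.1
      rw [bid_nat, hy, map_zero, map_zero]
    obtain ⟨x, rfl⟩ := h.exists_of h1
    have h2 : x = 0 := by
      apply hA.1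
      rw [map_zero]
      ext φ
      obtain ⟨ψ, rfl⟩ := hs φ
      exact LinearMap.congr_fun hy ψ
    rw [h2, map_zero]
  · intro η
    obtain ⟨z, hz⟩ := hD.2 (dlm C (dlm C g) η)
    obtain ⟨y, rfl⟩ := h.surj z
    let η' := η - bidualityMap R C B y
    have h1 : ∀ ψ : dl C D, η' (dlm C g ψ) = 0 := by
      intro ψ
      have := LinearMap.congr_fun hz ψ
      change η (dlm C g ψ) - ψ (g y) = 0
      rw [sub_eq_zero]; exact this.symm
    -- η' factors through dlm C f
    have hle : LinearMap.ker (dlm C f) ≤ LinearMap.ker η' := by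
      rw [hinj.ex]; rintro _ ⟨ψ, rfl⟩; exact h1 ψ
    let ζ : ↥(dl C (dl C A)) := (LinearMap.ker (dlm C f)).liftQ η' hle ∘ₗ
      ((dlm C f).quotKerEquivOfSurjective hs).symm.toLinearMap
    have hζ : ∀ ψ : dl C B, ζ (dlm C f ψ) = η' ψ := by
      intro ψ
      have : ((dlm C f).quotKerEquivOfSurjective hs).symm (dlm C f ψ) = Submodule.Quotient.mk ψ := by
        rw [LinearEquiv.symm_apply_eq]; rfl
      simp only [ζ, LinearMap.comp_apply, LinearEquiv.coe_coe]
      rw [this]; rfl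
    obtain ⟨x, hx⟩ := hA.2 ζ
    refine ⟨y + f x, ?_⟩
    ext ψ
    have := hζ ψ
    rw [← hx] at this
    have h3 : ψ (f x) = η ψ - ψ y := this
    change ψ (y + f x) = η ψ
    rw [map_add, h3]; abel

theorem SES.bid_left (h : SES f g) (hs : Function.Surjective (dlm C f))
    (hB : Function.Bijective (bidualityMap R C B)) (hD : Function.Injective (bidualityMap R C D)) :
    Function.Bijective (bidualityMap R C A) := by
  constructor
  · rw [← LinearMap.ker_eq_bot, LinearMap.ker_eq_bot']
    intro x hx
    apply h.inj
    apply hB.1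
    rw [bid_nat, hx]; simp
  · intro ζ
    obtain ⟨y, hy⟩ := hB.2 (dlm C (dlm C f) ζ)
    have h1 : g y = 0 := by
      apply hD
      rw [bid_nat, hy, map_zero]
      ext ψ
      change ζ (dlm C f (dlm C g ψ)) = 0
      have : dlm C f (dlm C g ψ) = 0 := by
        ext x; simp [h.comp]
      rw [this, map_zero]
    obtain ⟨x, rfl⟩ := h.exists_of h1
    refine ⟨x, ?_⟩
    ext φ
    obtain ⟨ψ, rfl⟩ := hs φ
    exact LinearMap.congr_fun hy ψ

/-- Shorthand for totally reflexive. -/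
abbrev TR (C A : ModuleCat.{u} R) : Prop := IsTotallyCReflexive R C A

theorem TR.fin (h : TR C A) : Module.Finite R A := h.1
theorem TR.bij (h : TR C A) : Function.Bijective (bidualityMap R C A) := h.2.1
theorem TR.ez (h : TR C A) (i : ℕ) : EZ C A (i+1) := h.2.2.1 _ (Nat.succ_pos i)
theorem TR.ezd (h : TR C A) (i : ℕ) : EZ C (dl C A) (i+1) := h.2.2.2 _ (Nat.succ_pos i)

theorem TR.mk' (h1 : Module.Finite R A) (h2 : Function.Bijective (bidualityMap R C A))
    (h3 : ∀ i, EZ C A (i+1)) (h4 : ∀ i, EZ C (dl C A) (i+1)) : TR C A :=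
  ⟨h1, h2, fun i hi => by obtain ⟨j, rfl⟩ := Nat.exists_eq_succ_of_ne_zero hi.ne'; exact h3 j,
   fun i hi => by obtain ⟨j, rfl⟩ := Nat.exists_eq_succ_of_ne_zero hi.ne'; exact h4 j⟩

theorem SES.tr_mid (h : SES f g) (hA : TR C A) (hD : TR C D) : TR C B := by
  have hs := h.dual_surj (hD.ez 0)
  have hd := h.dual hs
  have := hA.fin
  have := hD.fin
  refine TR.mk' ?_ (h.bid_mid hs hA.bij hD.bij) (fun i => h.ez_mid (hA.ez i) (hD.ez i))
    (fun i => hd.ez_mid (hD.ezd i) (hA.ezd i))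
  have : Module.Finite R (↥B ⧸ LinearMap.range f) := by
    rw [← h.ex]
    exact Module.Finite.equiv (g.quotKerEquivOfSurjective h.surj).symm
  exact Module.Finite.of_submodule_quotient (LinearMap.range f)

theorem SES.tr_left [IsNoetherianRing R] (h : SES f g) (hB : TR C B) (hD : TR C D) : TR C A := by
  have hs := h.dual_surj (hD.ez 0)
  have hd := h.dual hs
  have := hB.fin
  have := hD.fin
  refine TR.mk' (Module.Finite.of_injective f h.inj) (h.bid_left hs hB.bij hD.bij.1)
    (fun i => h.ez_left (hB.ez i) (hD.ez (i+1))) (fun i => ?_)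
  cases i with
  | zero =>
    refine hd.ez_one (hB.ezd 0) ?_
    intro η
    obtain ⟨z, rfl⟩ := hD.bij.2 η
    obtain ⟨y, rfl⟩ := h.surj z
    exact ⟨bidualityMap R C B y, rfl⟩
  | succ i => exact hd.ez_right (hD.ezd i) (hB.ezd (i+1))

theorem TR.retract (i : ↥A →ₗ[R] ↥B) (r : ↥B →ₗ[R] ↥A)
    (h : r ∘ₗ i = LinearMap.id) (hB : TR C B) : TR C A := by
  have h' : ∀ x, r (i x) = x := LinearMap.congr_fun h
  have := hB.fin
  refine TR.mk' (Module.Finite.of_surjective r fun x => ⟨i x, h' x⟩) ?_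
    (fun j => EZ_retract i r h (hB.ez j)) (fun j => EZ_retract (dlm C r) (dlm C i) ?_ (hB.ezd j))
  · constructor
    · intro x y hxy
      have : i x = i y := hB.bij.1 (by rw [bid_nat, hxy, ← bid_nat])
      rw [← h' x, this, h']
    · intro η
      obtain ⟨y, hy⟩ := hB.bij.2 (dlm C (dlm C i) η)
      refine ⟨r y, ?_⟩
      rw [bid_nat, hy]
      ext φ
      change η (φ ∘ₗ r ∘ₗ i) = η φ
      rw [h]; rfl
  · ext φ x
    simp [h']

theorem TR.congr (e : ↥A ≃ₗ[R] ↥B) (hB : TR C B) : TR C A :=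
  TR.retract e.toLinearMap e.symm.toLinearMap (by ext; simp) hB

theorem TR.dual [IsNoetherianRing R] [Module.Finite R C] (h : TR C A) : TR C (dl C A) := by
  have := h.fin
  have hb : Function.Bijective (dlm C (A := A) (B := dl C (dl C A)) (bidualityMap R C A)) := by
    constructor
    · intro a b hab
      ext η
      obtain ⟨x, rfl⟩ := h.bij.2 η
      exact LinearMap.congr_fun hab x
    · intro φ
      exact ⟨_, bid_dual φ⟩
  refine TR.mk' inferInstance ?_ h.ezd (fun i =>
    EZ_congr (LinearEquiv.ofBijective (bidualityMap R C A) h.bij : ↥A ≃ₗ[R] ↥(dl C (dl C A))).symm (h.ez i))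
  constructor
  · intro a b hab
    rw [← bid_dual a, ← bid_dual b, hab]
  · intro η
    refine ⟨dlm C (A := A) (B := dl C (dl C A)) (bidualityMap R C A) η, ?_⟩
    apply hb.1
    exact bid_dual _

theorem TR.zero [Subsingleton A] : TR C A := by
  have : Module.Projective R A := inferInstance
  have h2 : Subsingleton (↥A →ₗ[R] ↥C) := inferInstance
  have h3 : Subsingleton ((↥A →ₗ[R] ↥C) →ₗ[R] ↥C) := inferInstance
  have : Module.Projective R (↥A →ₗ[R] ↥C) := inferInstance
  exact TR.mk' inferInstance ⟨fun _ _ _ => Subsingleton.elim _ _, fun y => ⟨0, Subsingleton.elim _ _⟩⟩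
    (fun i => EZ_of_proj _ _ _) (fun i => EZ_of_proj _ (dl C A) _)

theorem TR.ring (hC : IsSemidualizing R C) : TR C (ModuleCat.of R R) := by
  have e : ↥(dl C (ModuleCat.of R R)) ≃ₗ[R] ↥C := LinearMap.ringLmapEquivSelf R R C
  refine TR.mk' inferInstance ?_ (fun i => EZ_of_proj _ _ _) (fun i => EZ_congr e (hC.2.2 _ (Nat.succ_pos i)))
  clear e
  let e : ↥(dl C (ModuleCat.of R R)) ≃ₗ[R] ↥C := LinearMap.ringLmapEquivSelf R R C
  have he : ∀ φ, e φ = φ (1:R) := fun φ => rfl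
  have hb := hC.2.1
  constructor
  · intro a b hab
    apply hb.1
    ext c
    have := LinearMap.congr_fun hab (e.symm c)
    have h1 : ∀ a : R, (e.symm c) a = a • c := by
      intro a
      have : (e.symm c) (1:R) = c := by rw [← he, e.apply_symm_apply]
      conv_lhs => rw [← mul_one a, ← smul_eq_mul]
      exact ((e.symm c).map_smul a (1:R)).trans (by rw [this])
    change (e.symm c) a = (e.symm c) b at this
    rw [h1, h1] at this
    exact this
  · intro η
    obtain ⟨r, hr⟩ := hb.2 (η ∘ₗ e.symm.toLinearMap)
    refine ⟨r, ?_⟩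
    ext φ
    have h2 := LinearMap.congr_fun hr (e φ)
    simp only [LinearMap.comp_apply, LinearEquiv.coe_coe, e.symm_apply_apply] at h2
    rw [← h2]
    change φ r = r • φ (1:R)
    rw [← map_smul]
    congr 1
    exact (mul_one r).symm

theorem TR.pow (hC : IsSemidualizing R C) (n : ℕ) : TR C (ModuleCat.of R (Fin n → R)) := by
  induction n with
  | zero => 
    have : Subsingleton (ModuleCat.of R (Fin 0 → R)) := inferInstanceAs (Subsingleton (Fin 0 → R))
    exact TR.zero
  | succ n ih =>
    let e : (Fin (n+1) → R) ≃ₗ[R] (R × (Fin n → R)) := (Fin.consLinearEquiv R (fun _ : Fin (n+1) => R)).symm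
    refine TR.congr (B := ModuleCat.of R (R × (Fin n → R))) e ?_
    have : SES (A := ModuleCat.of R R) (B := ModuleCat.of R (R × (Fin n → R))) 
      (D := ModuleCat.of R (Fin n → R)) (LinearMap.inl R R (Fin n → R)) (LinearMap.snd R R (Fin n → R)) :=
      ⟨LinearMap.inl_injective, LinearMap.snd_surjective, (LinearMap.range_inl _ _ _).symm⟩
    exact this.tr_mid (TR.ring hC) ih

theorem TR.proj (hC : IsSemidualizing R C) [Module.Finite R A] [Module.Projective R A] : TR C A := by
  obtain ⟨n, f, g, hf, hg, h⟩ := Module.Finite.exists_comp_eq_id_of_projective R A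
  exact TR.retract (B := ModuleCat.of R (Fin n → R)) g f h (TR.pow hC n)

end helpers

section helpers
variable {R}
variable {C : ModuleCat.{u} R} {A B D : ModuleCat.{u} R} {f : ↥A →ₗ[R] ↥B} {g : ↥B →ₗ[R] ↥D}

theorem gc_succ_of (h : SES f g) {n : ℕ} (hB : TR C B) (hA : gcdimLE R C n A) : gcdimLE R C (n+1) D :=
  ⟨B, A, f, g, h.inj, h.surj, h.ex, hB, hA⟩

theorem gc_succ_iff {n : ℕ} : gcdimLE R C (n+1) D ↔ ∃ (B A : ModuleCat.{u} R) (f : ↥A →ₗ[R] ↥B)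
    (g : ↥B →ₗ[R] ↥D), SES f g ∧ TR C B ∧ gcdimLE R C n A :=
  ⟨fun ⟨B, A, f, g, h1, h2, h3, h4, h5⟩ => ⟨B, A, f, g, ⟨h1, h2, h3⟩, h4, h5⟩,
   fun ⟨_, _, _, _, h, h4, h5⟩ => gc_succ_of h h4 h5⟩

theorem SES.ofKer (g : ↥B →ₗ[R] ↥D) (hg : Function.Surjective g) :
    SES (A := ModuleCat.of R (LinearMap.ker g)) (LinearMap.ker g).subtype g :=
  ⟨Subtype.val_injective, hg, (Submodule.range_subtype _).symm⟩

theorem gc_congr {n : ℕ} (e : ↥A ≃ₗ[R] ↥B) (h : gcdimLE R C n B) : gcdimLE R C n A := by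
  cases n with
  | zero => exact TR.congr e h
  | succ n =>
    obtain ⟨X, K, f, g, h, h4, h5⟩ := gc_succ_iff.1 h
    refine gc_succ_of (f := f) (g := e.symm.toLinearMap ∘ₗ g) ⟨h.inj, e.symm.surjective.comp h.surj, ?_⟩ h4 h5
    rw [LinearMap.ker_comp_of_ker_eq_bot _ (LinearEquiv.ker _)]
    exact h.ex

theorem gc_mono {n : ℕ} : ∀ {A : ModuleCat.{u} R}, gcdimLE R C n A → gcdimLE R C (n+1) A := by
  induction n with
  | zero =>
    intro A h
    refine gc_succ_of (A := ModuleCat.of R PUnit.{u+1}) (f := 0) (g := LinearMap.id) ⟨?_, fun x => ⟨x, rfl⟩, ?_⟩ h ?_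
    · intro x y _; exact Subsingleton.elim (α := PUnit) x y
    · simp
    · have : Subsingleton (ModuleCat.of R PUnit.{u+1}) := inferInstanceAs (Subsingleton PUnit)
      exact TR.zero
  | succ n ih =>
    intro A h
    obtain ⟨X, K, f, g, h, h4, h5⟩ := gc_succ_iff.1 h
    exact gc_succ_of h h4 (ih h5)

/-- `A → B → D` with `D` totally reflexive: `gcdim B ≤ n → gcdim A ≤ n`. -/
theorem SES.gc_left [IsNoetherianRing R] (h : SES f g) (hD : TR C D) {n : ℕ} (hB : gcdimLE R C n B) :
    gcdimLE R C n A := by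
  cases n with
  | zero => exact h.tr_left hB hD
  | succ n =>
    obtain ⟨X, K, i, p, hs, hX, hK⟩ := gc_succ_iff.1 hB
    have hgp : Function.Surjective (g ∘ₗ p) := h.surj.comp hs.surj
    let X' := ModuleCat.of R (LinearMap.ker (g ∘ₗ p))
    have hX' : TR C X' := (SES.ofKer (g ∘ₗ p) hgp).tr_left hX hD
    let eA : ↥A ≃ₗ[R] LinearMap.range f := LinearEquiv.ofInjective f h.inj
    let q : ↥X' →ₗ[R] ↥A := eA.symm.toLinearMap ∘ₗ
      (p ∘ₗ (LinearMap.ker (g ∘ₗ p)).subtype).codRestrict (LinearMap.range f) (fun x => h.ex ▸ x.2)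
    have hq : ∀ x : X', f (q x) = p x.1 := by
      intro x
      have : (eA (q x)).1 = p x.1 := by simp [q]; rfl
      exact this
    let i' : ↥K →ₗ[R] ↥X' := i.codRestrict _ (fun x => by simp [hs.comp])
    have hi' : ∀ x, (i' x).1 = i x := fun x => rfl
    refine gc_succ_of (f := i') (g := q) ⟨?_, ?_, ?_⟩ hX' hK
    · intro x y hxy
      exact hs.inj (congrArg Subtype.val hxy)
    · intro a
      obtain ⟨x, hx⟩ := hs.surj (f a)
      refine ⟨⟨x, ?_⟩, ?_⟩
      · simp [hx, h.comp]
      · apply h.inj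
        rw [hq]; exact hx
    · ext x
      constructor
      · intro hx
        have h0 : p x.1 = 0 := by rw [← hq, LinearMap.mem_ker.1 hx, map_zero]
        obtain ⟨k, hk⟩ := hs.exists_of h0
        exact ⟨k, Subtype.ext hk⟩
      · rintro ⟨k, rfl⟩
        rw [LinearMap.mem_ker]
        apply h.inj
        rw [hq, hi', hs.comp, map_zero]

theorem exists_cover (D : ModuleCat.{u} R) [Module.Finite R D] : ∃ (P : ModuleCat.{u} R) (p : ↥P →ₗ[R] ↥D),
    Module.Finite R P ∧ Module.Projective R P ∧ Function.Surjective p := by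
  obtain ⟨n, p, hp⟩ := Module.Finite.exists_fin' R D
  exact ⟨ModuleCat.of R (Fin n → R), p, inferInstanceAs (Module.Finite R (Fin n → R)),
    inferInstanceAs (Module.Projective R (Fin n → R)), hp⟩

theorem TR.prod (hA : TR C A) (hB : TR C B) : TR C (ModuleCat.of R (↥A × ↥B)) := by
  have : SES (A := A) (B := ModuleCat.of R (↥A × ↥B)) 
      (D := B) (LinearMap.inl R A B) (LinearMap.snd R A B) :=
      ⟨LinearMap.inl_injective, LinearMap.snd_surjective, (LinearMap.range_inl _ _ _).symm⟩
  exact this.tr_mid hA hB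

theorem gc_mid [IsNoetherianRing R] (hC : IsSemidualizing R C) {n : ℕ} :
    ∀ {A B D : ModuleCat.{u} R} {f : ↥A →ₗ[R] ↥B} {g : ↥B →ₗ[R] ↥D}, SES f g → TR C D →
      gcdimLE R C n A → gcdimLE R C n B := by
  induction n with
  | zero => intro A B D f g h hD hA; exact h.tr_mid hA hD
  | succ n ih =>
    intro A B D f g h hD hA
    obtain ⟨X, K, i, p, hs, hX, hK⟩ := gc_succ_iff.1 hA
    have := hD.fin
    obtain ⟨Q, q, hQ1, hQ2, hq⟩ := exists_cover D
    have hQ : TR C Q := TR.proj hC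
    obtain ⟨l, hl⟩ := Module.projective_lifting_property g q h.surj
    have hl' : ∀ x, g (l x) = q x := LinearMap.congr_fun hl
    let r : ↥(ModuleCat.of R (↥X × ↥Q)) →ₗ[R] ↥B := (f ∘ₗ p).coprod l
    have hr : ∀ x y, r (x, y) = f (p x) + l y := fun x y => by simp [r]
    have hrs : Function.Surjective r := by
      intro b
      obtain ⟨y, hy⟩ := hq (g b)
      have : g (b - l y) = 0 := by rw [map_sub, hl', hy, sub_self]
      obtain ⟨a, ha⟩ := h.exists_of this
      obtain ⟨x, rfl⟩ := hs.surj a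
      exact ⟨(x, y), by rw [hr, ha]; abel⟩
    refine gc_succ_of (SES.ofKer r hrs) (hX.prod hQ) ?_
    have hkq : TR C (ModuleCat.of R (LinearMap.ker q)) := (SES.ofKer q hq).tr_left hQ hD
    let s : ↥(ModuleCat.of R (LinearMap.ker r)) →ₗ[R] ↥(ModuleCat.of R (LinearMap.ker q)) :=
      ((LinearMap.snd R X Q) ∘ₗ (LinearMap.ker r).subtype).codRestrict _ (by
        rintro ⟨⟨x, y⟩, hxy⟩
        have hxy' : f (p x) + l y = 0 := hxy
        change q y = 0
        rw [← hl', ← zero_add (g (l y)), ← h.comp (p x), ← map_add, hxy', map_zero, h.comp])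
    let j : ↥K →ₗ[R] ↥(ModuleCat.of R (LinearMap.ker r)) :=
      ((LinearMap.inl R X Q) ∘ₗ i).codRestrict _ (by
        intro k
        change r (i k, 0) = 0
        rw [hr, hs.comp, map_zero, map_zero, zero_add])
    refine ih (f := j) (g := s) ⟨?_, ?_, ?_⟩ hkq hK
    · intro a b hab
      apply hs.inj
      exact congrArg (fun z => z.1.1) hab
    · rintro ⟨y, hy⟩
      have : g (l y) = 0 := by rw [hl']; exact hy
      obtain ⟨a, ha⟩ := h.exists_of this
      obtain ⟨x, rfl⟩ := hs.surj a
      refine ⟨⟨(-x, y), ?_⟩, rfl⟩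
      change r (-x, y) = 0
      rw [hr, map_neg, map_neg, ha]; simp
    · ext ⟨⟨x, y⟩, hxy⟩
      constructor
      · intro hx
        have hy : y = 0 := congrArg Subtype.val hx
        subst hy
        have h0 : f (p x) + l 0 = 0 := hxy
        rw [map_zero, add_zero] at h0
        have h1 : p x = 0 := h.inj (by rw [h0, map_zero])
        obtain ⟨k, hk⟩ := hs.exists_of h1
        exact ⟨k, Subtype.ext (Prod.ext hk rfl)⟩
      · rintro ⟨k, hk⟩
        have : y = 0 := (congrArg (fun z => z.1.2) hk).symm
        apply Subtype.ext
        exact this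

theorem SES.gc_iff [IsNoetherianRing R] (hC : IsSemidualizing R C) (h : SES f g) (hD : TR C D) {n : ℕ} :
    gcdimLE R C n A ↔ gcdimLE R C n B := ⟨gc_mid hC h hD, h.gc_left hD⟩

/-- Schanuel-type comparison. -/
theorem gc_schanuel [IsNoetherianRing R] (hC : IsSemidualizing R C) 
    {K X K' X' M : ModuleCat.{u} R} {f : ↥K →ₗ[R] ↥X} {g : ↥X →ₗ[R] ↥M}
    {f' : ↥K' →ₗ[R] ↥X'} {g' : ↥X' →ₗ[R] ↥M} (h : SES f g) (h' : SES f' g') (hX : TR C X) (hX' : TR C X')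
    {n : ℕ} (hK : gcdimLE R C n K) : gcdimLE R C n K' := by
  let r : (↥X × ↥X') →ₗ[R] ↥M := g.coprod (-g')
  have hr : ∀ x y, r (x, y) = 0 ↔ g x = g' y := fun x y => by 
    simp [r, add_neg_eq_zero]
  let Y := ModuleCat.of R (LinearMap.ker r)
  let a : ↥K →ₗ[R] ↥Y := (LinearMap.inl R X X' ∘ₗ f).codRestrict _ (fun k => by
    change r (f k, 0) = 0
    rw [hr, h.comp, map_zero])
  let b : ↥Y →ₗ[R] ↥X' := LinearMap.snd R X X' ∘ₗ (LinearMap.ker r).subtype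
  let a' : ↥K' →ₗ[R] ↥Y := (LinearMap.inr R X X' ∘ₗ f').codRestrict _ (fun k => by
    change r (0, f' k) = 0
    rw [hr, h'.comp, map_zero])
  let b' : ↥Y →ₗ[R] ↥X := LinearMap.fst R X X' ∘ₗ (LinearMap.ker r).subtype
  have h1 : SES a b := by
    refine ⟨fun x y hxy => h.inj (congrArg (fun z => z.1.1) hxy), fun y => ?_, ?_⟩
    · obtain ⟨x, hx⟩ := h.surj (g' y)
      exact ⟨⟨(x, y), (hr x y).2 hx⟩, rfl⟩
    · ext ⟨⟨x, y⟩, hxy⟩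
      constructor
      · intro hy
        have hy : y = 0 := hy
        subst hy
        have := (hr x 0).1 hxy
        rw [map_zero] at this
        obtain ⟨k, hk⟩ := h.exists_of this
        exact ⟨k, Subtype.ext (Prod.ext hk rfl)⟩
      · rintro ⟨k, hk⟩
        exact (congrArg (fun z => z.1.2) hk).symm
  have h2 : SES a' b' := by
    refine ⟨fun x y hxy => h'.inj (congrArg (fun z => z.1.2) hxy), fun x => ?_, ?_⟩
    · obtain ⟨y, hy⟩ := h'.surj (g x)
      exact ⟨⟨(x, y), (hr x y).2 hy.symm⟩, rfl⟩
    · ext ⟨⟨x, y⟩, hxy⟩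
      constructor
      · intro hx
        have hx : x = 0 := hx
        subst hx
        have := (hr 0 y).1 hxy
        rw [map_zero] at this
        obtain ⟨k, hk⟩ := h'.exists_of this.symm
        exact ⟨k, Subtype.ext (Prod.ext rfl hk)⟩
      · rintro ⟨k, hk⟩
        exact (congrArg (fun z => z.1.1) hk).symm
  exact h2.gc_left hX (gc_mid hC h1 hX' hK)

theorem SES.gc_succ_iff [IsNoetherianRing R] (hC : IsSemidualizing R C) (h : SES f g) (hB : TR C B) {n : ℕ} :
    gcdimLE R C (n+1) D ↔ gcdimLE R C n A := by
  constructor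
  · intro hD
    obtain ⟨X, K, i, p, hs, hX, hK⟩ := _root_.gc_succ_iff.1 hD
    exact gc_schanuel hC hs h hX hB hK
  · exact gc_succ_of h hB

theorem gcdim_le_iff {n : ℕ} : gcdim R C A ≤ n ↔ gcdimLE R C n A := by
  constructor
  · intro h
    have h1 : gcdim R C A ≠ ⊤ := ne_top_of_le_ne_top (ENat.natCast_ne_top n) h
    have hne : ((fun n : ℕ => (n : ℕ∞)) '' {n | gcdimLE R C n A}).Nonempty := by
      by_contra hc
      rw [Set.not_nonempty_iff_eq_empty] at hc
      exact h1 (by rw [gcdim, hc, sInf_empty])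
    obtain ⟨m, hm, hm'⟩ := csInf_mem hne
    have hmn : m ≤ n := by
      rw [gcdim, ← hm'] at h
      exact Nat.cast_le.1 h
    have : ∀ k, gcdimLE R C (m + k) A := by
      intro k
      induction k with
      | zero => exact hm
      | succ k ih => exact gc_mono ih
    obtain ⟨k, rfl⟩ := Nat.exists_eq_add_of_le hmn
    exact this k
  · intro h
    exact sInf_le ⟨n, h, rfl⟩

theorem enat_eq_of {a b : ℕ∞} (h : ∀ n : ℕ, a ≤ n ↔ b ≤ n) : a = b := by
  apply le_antisymm
  · cases b with
    | top => exact le_top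
    | coe b => exact (h b).2 le_rfl
  · cases a with
    | top => exact le_top
    | coe a => exact (h a).1 le_rfl

theorem SES.gcdim_eq [IsNoetherianRing R] (hC : IsSemidualizing R C) (h : SES f g) (hB : TR C B)
    (hD : ¬ TR C D) : gcdim R C D = 1 + gcdim R C A := by
  apply enat_eq_of
  intro n
  rw [gcdim_le_iff]
  cases n with
  | zero => 
    simp only [CharP.cast_eq_zero, nonpos_iff_eq_zero, add_eq_zero, one_ne_zero, false_and, iff_false]
    exact hD
  | succ n =>
    rw [h.gc_succ_iff hC hB, ← gcdim_le_iff, add_comm]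
    push_cast
    exact (ENat.add_le_add_iff_right (by simp)).symm

end helpers

section helpers
variable {R}
variable {C : ModuleCat.{u} R} {A B D : ModuleCat.{u} R} {f : ↥A →ₗ[R] ↥B} {g : ↥B →ₗ[R] ↥D}

/-- Left exactness of the dual. -/
theorem dlm_ker (hg : Function.Surjective g) (hex : LinearMap.ker g = LinearMap.range f) :
    LinearMap.ker (dlm C f) = LinearMap.range (dlm C g) := by
  ext φ
  constructor
  · intro hφ
    have hφ' : ∀ x, φ (f x) = 0 := fun x => LinearMap.congr_fun hφ x
    have hle : LinearMap.ker g ≤ LinearMap.ker φ := by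
      rw [hex]; rintro _ ⟨x, rfl⟩; exact hφ' x
    refine ⟨(LinearMap.ker g).liftQ φ hle ∘ₗ (g.quotKerEquivOfSurjective hg).symm.toLinearMap, ?_⟩
    ext y
    simp only [LinearMap.lcomp_apply, LinearMap.comp_apply, LinearEquiv.coe_coe]
    have : (g.quotKerEquivOfSurjective hg).symm (g y) = Submodule.Quotient.mk y := by
      rw [LinearEquiv.symm_apply_eq]; rfl
    rw [this]; rfl
  · rintro ⟨ψ, rfl⟩
    rw [LinearMap.mem_ker]
    ext x
    have : f x ∈ LinearMap.ker g := hex ▸ ⟨x, rfl⟩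
    change ψ (g (f x)) = 0
    rw [LinearMap.mem_ker.1 this, map_zero]

theorem dlm_inj (hg : Function.Surjective g) : Function.Injective (dlm C g) := fun a b hab => by
  ext x
  obtain ⟨y, rfl⟩ := hg x
  exact LinearMap.congr_fun hab y

theorem gcdim_congr (e : ↥A ≃ₗ[R] ↥B) : gcdim R C A = gcdim R C B :=
  enat_eq_of fun n => by rw [gcdim_le_iff, gcdim_le_iff]; exact ⟨gc_congr e.symm, gc_congr e⟩

/-- Two cokernels of the same map are isomorphic. -/
theorem SES.uniq {A B D D' : ModuleCat.{u} R} {f : ↥A →ₗ[R] ↥B} {g : ↥B →ₗ[R] ↥D} {g' : ↥B →ₗ[R] ↥D'} 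
    (h : SES f g) (h' : SES f g') : Nonempty (↥D ≃ₗ[R] ↥D') :=
  ⟨(g.quotKerEquivOfSurjective h.surj).symm ≪≫ₗ Submodule.quotEquivOfEq _ _ (h.ex.trans h'.ex.symm) ≪≫ₗ 
    g'.quotKerEquivOfSurjective h'.surj⟩

theorem main_ind [IsNoetherianRing R] (hC : IsSemidualizing R C) (n : ℕ) :
    ∀ (M P N : ModuleCat.{u} R) (π : ↥P →ₗ[R] ↥M) (φ : ↥(dl C P) →ₗ[R] ↥N),
      Module.Finite R P → Module.Projective R P → Function.Surjective π →
      SES (dlm C π) φ → (∀ i < n, EZ C M (i+1)) → ¬ EZ C M (n+1) → gcdimLE R C (n+1) M →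
      gcdim R C (ExtM R M C (n+1)) = (n+1 : ℕ) + gcdim R C N := by
  have := hC.1
  induction n with
  | zero =>
    intro M P N π φ hP1 hP2 hπ hN _ hne hg
    have hPT : TR C P := TR.proj hC
    have hK := SES.ofKer π hπ
    have hKT : TR C (ModuleCat.of R (LinearMap.ker π)) := (hK.gc_succ_iff hC hPT).1 hg
    obtain ⟨e⟩ := hK.coker (EZ_of_proj C P 0)
    let ι : ↥(ModuleCat.of R (LinearMap.ker π)) →ₗ[R] ↥P := (LinearMap.ker π).subtype
    let N' := LinearMap.range (dlm C ι)
    let E := ModuleCat.of R (↥(dl C (ModuleCat.of R (LinearMap.ker π))) ⧸ N')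
    have e : ↥E ≃ₗ[R] ExtM R M C 1 := e
    have hN' : SES (D := ModuleCat.of R N') (dlm C π) (dlm C ι).rangeRestrict :=
      ⟨hN.inj, LinearMap.surjective_rangeRestrict _, by
        rw [LinearMap.ker_rangeRestrict]
        exact dlm_ker hK.surj hK.ex⟩
    obtain ⟨eN⟩ := hN.uniq hN'
    rw [gcdim_congr eN, gcdim_congr e.symm]
    have hE : SES (A := ModuleCat.of R N') (B := dl C (ModuleCat.of R (LinearMap.ker π))) (D := E)
        N'.subtype N'.mkQ := ⟨Subtype.val_injective, Submodule.mkQ_surjective _, (Submodule.ker_mkQ _).trans (Submodule.range_subtype _).symm⟩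
    rw [hE.gcdim_eq hC hKT.dual]
    · simp
    · intro hET
      apply hne
      have hz : ∀ η : ↥(dl C E), η = 0 := by
        intro η
        obtain ⟨k, hk⟩ := hKT.bij.2 (η ∘ₗ N'.mkQ)
        have hk0 : k = 0 := by
          apply hK.inj
          apply hPT.bij.1
          rw [map_zero, map_zero]
          ext ψ
          have h1 := LinearMap.congr_fun hk (dlm C ι ψ)
          have h2 : N'.mkQ (dlm C ι ψ) = 0 := by
            simp only [Submodule.mkQ_apply, Submodule.Quotient.mk_eq_zero]
            exact ⟨ψ, rfl⟩
          have h3 : (η ∘ₗ N'.mkQ) (dlm C ι ψ) = 0 := by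
            rw [LinearMap.comp_apply, h2, map_zero]
          rw [h3] at h1
          exact h1
        refine LinearMap.ext fun z => ?_
        obtain ⟨y, rfl⟩ := N'.mkQ_surjective z
        have := LinearMap.congr_fun hk y
        rw [hk0, map_zero] at this
        exact this.symm
      have hsub : Subsingleton E := by
        refine subsingleton_of_forall_eq 0 fun x => hET.bij.1 ?_
        ext η
        rw [hz η]
        simp
      exact e.symm.toEquiv.subsingleton
  | succ n ih =>
    intro M P N π φ hP1 hP2 hπ hN hez hne hg
    have hPT : TR C P := TR.proj hC
    have hK := SES.ofKer π hπ
    let K := ModuleCat.of R (LinearMap.ker π)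
    have hKg : gcdimLE R C (n+1) K := (hK.gc_succ_iff hC hPT).1 hg
    have hsh : ∀ i, Nonempty (ExtM R K C (i+1) ≃ₗ[R] ExtM R M C (i+2)) := fun i =>
      hK.shift i (EZ_of_proj C P _) (EZ_of_proj C P _)
    have hKne : ¬ EZ C K (n+1) := fun hc => hne (by
      obtain ⟨e⟩ := hsh n
      have : Subsingleton (ExtM R K C (n+1)) := hc
      exact e.symm.toEquiv.subsingleton)
    have hKez : ∀ i < n, EZ C K (i+1) := by
      intro i hi
      obtain ⟨e⟩ := hsh i
      have : Subsingleton (ExtM R M C (i+2)) := hez (i+1) (by omega)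
      exact e.toEquiv.subsingleton
    have hKfin : Module.Finite R K := Module.Finite.of_injective _ hK.inj
    obtain ⟨P1, π1, hP11, hP12, hπ1⟩ := exists_cover K
    have hP1T : TR C P1 := TR.proj hC
    let NK := ModuleCat.of R (↥(dl C P1) ⧸ LinearMap.range (dlm C π1))
    have hNK : SES (D := NK) (dlm C π1) (LinearMap.range (dlm C π1)).mkQ :=
      ⟨dlm_inj hπ1, Submodule.mkQ_surjective _, Submodule.ker_mkQ _⟩
    have key := ih K P1 NK π1 _ hP11 hP12 hπ1 hNK hKez hKne hKg
    obtain ⟨e⟩ := hsh n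
    rw [gcdim_congr e.symm, key]
    obtain ⟨eN⟩ := hN.uniq (hK.dual (hK.dual_surj (hez 0 (by omega))))
    rw [gcdim_congr eN, hNK.gcdim_eq hC hP1T.dual]
    · push_cast
      ring
    · intro hT
      apply hKne
      have hKd : TR C (dl C K) := hNK.tr_left hP1T.dual hT
      have hbij : Function.Bijective (bidualityMap R C K) := by
        constructor
        · intro a b hab
          apply hK.inj
          apply hPT.bij.1
          rw [bid_nat (A := K), bid_nat (A := K), hab]
        · intro η
          obtain ⟨ξ, hξ⟩ := hNK.dual_surj (hT.ez 0) η
          obtain ⟨p, rfl⟩ := hP1T.bij.2 ξ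
          exact ⟨π1 p, hξ⟩
      exact (TR.congr (A := K) (LinearEquiv.ofBijective (bidualityMap R C K) hbij : ↥K ≃ₗ[R] ↥(dl C (dl C K)))
        hKd.dual).ez n

theorem tor_inj {L Q T : ModuleCat.{u} R} {l : ↥L →ₗ[R] ↥Q} {q : ↥Q →ₗ[R] ↥T} (h : SES l q)
    (hT : Subsingleton (TorM R T C 1)) : Function.Injective (l.rTensor ↥C) := by
  let P := ProjectiveResolution.of C
  let F := (MonoidalCategory.tensoringLeft (ModuleCat.{u} R)).obj T
  let K := (F.mapHomologicalComplex (ComplexShape.down ℕ)).obj P.complex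
  have e1 : TorM R T C 1 ≅ K.homology 1 := P.isoLeftDerivedObj F 1
  have hz : K.ExactAt 1 := by
    rw [HomologicalComplex.exactAt_iff_isZero_homology]
    exact (ModuleCat.isZero_of_subsingleton _).of_iso e1.symm
  rw [K.exactAt_iff' 2 1 0 (by simp) (by simp), ShortComplex.moduleCat_exact_iff] at hz
  let d10 : ↥(P.complex.X 1) →ₗ[R] ↥(P.complex.X 0) := (P.complex.d 1 0).hom
  let d21 : ↥(P.complex.X 2) →ₗ[R] ↥(P.complex.X 1) := (P.complex.d 2 1).hom
  let ε : ↥(P.complex.X 0) →ₗ[R] ↥C := (P.π.f 0).hom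
  have hTex : ∀ t : ↥T ⊗[R] ↥(P.complex.X 1), d10.lTensor T t = 0 → ∃ s, d21.lTensor T s = t :=
    fun t ht => hz t ht
  have hεs : Function.Surjective ε := (ModuleCat.epi_iff_surjective _).1 inferInstance
  have hε : Function.Exact d10 ε := by
    have := P.exact₀
    exact (ShortComplex.ShortExact.moduleCat_exact_iff_function_exact _).1 this
  have hdd : ∀ x, d10 (d21 x) = 0 := fun x => by
    have := congrArg (fun q => q.hom x) (P.complex.d_comp_d 2 1 0)
    exact this
  have hdd' : d10 ∘ₗ d21 = 0 := LinearMap.ext hdd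
  have hlq : Function.Exact l q := fun y => by
    rw [← LinearMap.mem_ker, h.ex]; rfl
  have hflat : Module.Flat R (P.complex.X 0) := by
    have : Module.Projective R (P.complex.X 0) := (IsProjective.iff_projective _).2 (P.projective 0)
    infer_instance
  rw [← LinearMap.ker_eq_bot, LinearMap.ker_eq_bot']
  intro x hx
  obtain ⟨y, rfl⟩ := LinearMap.lTensor_surjective L hεs x
  have comm : ∀ {A A' B B' : Type u} [AddCommGroup A] [AddCommGroup A'] [AddCommGroup B] [AddCommGroup B']
      [Module R A] [Module R A'] [Module R B] [Module R B'] (a : A →ₗ[R] A') (b : B →ₗ[R] B') (z : A ⊗[R] B),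
      a.rTensor B' (b.lTensor A z) = b.lTensor A' (a.rTensor B z) := by
    intros
    rw [← LinearMap.comp_apply, ← LinearMap.comp_apply, LinearMap.rTensor_comp_lTensor,
      LinearMap.lTensor_comp_rTensor]
  rw [comm] at hx
  obtain ⟨z, hz'⟩ := (lTensor_exact Q hε hεs _).1 hx
  have h1 : d10.lTensor T (q.rTensor _ z) = 0 := by
    rw [← comm, hz']
    exact (rTensor_exact _ hlq h.surj _).2 ⟨y, rfl⟩
  obtain ⟨s, hs⟩ := hTex _ h1
  obtain ⟨s', rfl⟩ := LinearMap.rTensor_surjective _ h.surj s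
  rw [← comm] at hs
  have h2 : q.rTensor _ (z - d21.lTensor Q s') = 0 := by rw [map_sub, hs, sub_self]
  obtain ⟨w, hw⟩ := (rTensor_exact _ hlq h.surj _).1 h2
  have h3 : d10.lTensor Q (d21.lTensor Q s') = 0 := by
    rw [← LinearMap.comp_apply, ← LinearMap.lTensor_comp, hdd', LinearMap.lTensor_zero]; rfl
  have h4 : l.rTensor _ (d10.lTensor L w) = l.rTensor _ y := by
    rw [comm, hw, map_sub, h3, sub_zero, hz']
  have h5 := Module.Flat.rTensor_preserves_injective_linearMap l h.inj h4
  rw [← h5]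
  exact (lTensor_exact L hε hεs _).2 ⟨w, rfl⟩

theorem TR.tensor [IsNoetherianRing R] (hC : IsSemidualizing R C) (Q : ModuleCat.{u} R)
    [Module.Finite R Q] [Module.Projective R Q] : TR C (ModuleCat.of R (↥Q ⊗[R] ↥C)) := by
  have := hC.1
  have h : TR C (ModuleCat.of R (Module.Dual R Q)) := by
    have : Module.Finite R (ModuleCat.of R (Module.Dual R Q)) := inferInstanceAs (Module.Finite R (Module.Dual R Q))
    have : Module.Projective R (ModuleCat.of R (Module.Dual R Q)) :=
      inferInstanceAs (Module.Projective R (Module.Dual R Q))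
    exact TR.proj hC
  refine TR.congr ?_ h.dual
  exact (Module.evalEquiv R Q).rTensor C ≪≫ₗ dualTensorHomEquiv R (Module.Dual R Q) C

theorem dual_nat {P0 P1 : ModuleCat.{u} R} (d : ↥P1 →ₗ[R] ↥P0) (x : Module.Dual R P0 ⊗[R] ↥C) :
    dualTensorHom R P1 C ((LinearMap.lcomp R R d).rTensor C x) = dlm C d (dualTensorHom R P0 C x) := by
  induction x with
  | zero => simp
  | add x y hx hy => simp only [map_add, hx, hy]
  | tmul a b => ext z; simp

end helpers

/-- if `M` is reduced `G_C`-perfect of `G_C`-dimension `n` and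
`Tor_1^R(Tr(M), C) = 0`, then
`G_C-dim(M) + G_C-dim(λM ⊗ C) = G_C-dim(Ext_R^n(M,C))` in `ℕ∞`. -/
theorem statement6 [IsNoetherianRing R] (hsp : IsSemiperfectRing R)
    (C : ModuleCat.{u} R) (hC : IsSemidualizing R C)
    (M : ModuleCat.{u} R) (hMfin : Module.Finite R ↥M)
    (n : ℕ) (hred : IsReducedGCPerfect R C M) (hdim : gcdim R C M = n)
    (htor : ∀ T : ModuleCat.{u} R, IsTranspose R M T →
      Subsingleton (TorM R T C 1)) :
    ∀ L : ModuleCat.{u} R, IsLambda R M L →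
      gcdim R C M + gcdim R C (ModuleCat.of R (↥L ⊗[R] ↥C)) =
        gcdim R C (ExtM R M C n) := by
  rintro L ⟨T, hT, Q, q, hQfin, ⟨hQproj, hqs, -⟩, ⟨eL⟩⟩
  have hTor := htor T hT
  obtain ⟨P1, P0, d, π, ⟨hP1, hP0, ⟨hP0p, hπ, -⟩, hdπ, hP1p, -⟩, ⟨eT⟩⟩ := hT
  have := hC.1
  -- the reduced grade
  have hrg : rgrade R C M = n := hred.2.trans hdim
  have hset : ∀ i : ℕ, 0 < i → i < n → EZ C M i := by
    intro i hi hin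
    by_contra hc
    have : rgrade R C M ≤ i := sInf_le ⟨i, ⟨hi, hc⟩, rfl⟩
    rw [hrg] at this
    exact absurd (Nat.cast_le.1 this) (by omega)
  have hmem : 0 < n ∧ ¬ EZ C M n := by
    have hne : ((fun i : ℕ => (i : ℕ∞)) '' {i | 0 < i ∧ ¬ Subsingleton (ExtM R M C i)}).Nonempty := by
      by_contra hc
      rw [Set.not_nonempty_iff_eq_empty] at hc
      rw [rgrade, hc, sInf_empty] at hrg
      exact ENat.natCast_ne_top n hrg.symm
    obtain ⟨m, hm, hm'⟩ := csInf_mem hne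
    have : m = n := Nat.cast_injective (R := ℕ∞) (hm'.trans hrg)
    subst this
    exact hm
  obtain ⟨k, rfl⟩ := Nat.exists_eq_succ_of_ne_zero hmem.1.ne'
  have hgM : gcdimLE R C (k+1) M := gcdim_le_iff.1 hdim.le
  let N := LinearMap.range (dlm C d)
  have hN : SES (D := ModuleCat.of R N) (dlm C π) (dlm C d).rangeRestrict :=
    ⟨dlm_inj hπ, LinearMap.surjective_rangeRestrict _, by
      rw [LinearMap.ker_rangeRestrict]
      exact dlm_ker hπ hdπ.symm⟩
  have key := main_ind hC k M P0 (ModuleCat.of R N) π _ hP0 hP0p hπ hN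
    (fun i hi => hset (i+1) (by omega) (by omega)) hmem.2 hgM
  rw [hdim, key]
  congr 1
  -- compare `L ⊗ C` with `N`
  have hLQ : SES (A := L) ((LinearMap.ker q).subtype ∘ₗ eL.toLinearMap) q :=
    ⟨Subtype.val_injective.comp eL.injective, hqs, by
      rw [LinearMap.range_comp, LinearEquiv.range, Submodule.map_top, Submodule.range_subtype]⟩
  have hinj := tor_inj hLQ hTor
  have hLQC : SES (A := ModuleCat.of R (↥L ⊗[R] ↥C)) (B := ModuleCat.of R (↥Q ⊗[R] ↥C))
      (D := ModuleCat.of R (↥T ⊗[R] ↥C))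
      (((LinearMap.ker q).subtype ∘ₗ eL.toLinearMap).rTensor C) (q.rTensor C) :=
    ⟨hinj, LinearMap.rTensor_surjective _ hqs, LinearMap.exact_iff.1 (rTensor_exact C (by
      rw [LinearMap.exact_iff]; exact hLQ.ex) hqs)⟩
  let t : Module.Dual R P1 →ₗ[R] ↥T := eT.symm.toLinearMap ∘ₗ (LinearMap.range (LinearMap.lcomp R R d)).mkQ
  have hts : Function.Surjective t := eT.symm.surjective.comp (Submodule.mkQ_surjective _)
  have htex : Function.Exact (LinearMap.lcomp R R d) t := by
    rw [LinearMap.exact_iff, LinearMap.ker_comp_of_ker_eq_bot _ (LinearEquiv.ker _)]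
    exact Submodule.ker_mkQ _
  have htC := rTensor_exact C htex hts
  let e1 := dualTensorHomEquiv R P1 C
  let e0 := dualTensorHomEquiv R P0 C
  let p : ↥(dl C P1) →ₗ[R] ↥(ModuleCat.of R (↥T ⊗[R] ↥C)) := t.rTensor C ∘ₗ e1.symm.toLinearMap
  have hNP : SES (A := ModuleCat.of R N) N.subtype p := by
    refine ⟨Subtype.val_injective, (LinearMap.rTensor_surjective _ hts).comp e1.symm.surjective, ?_⟩
    rw [Submodule.range_subtype]
    ext φ
    rw [LinearMap.mem_ker]
    change t.rTensor C (e1.symm φ) = 0 ↔ _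
    rw [htC]
    constructor
    · rintro ⟨x, hx⟩
      refine ⟨e0 x, ?_⟩
      have := dual_nat d x
      rw [hx] at this
      exact this.symm.trans (e1.apply_symm_apply φ)
    · rintro ⟨ψ, rfl⟩
      refine ⟨e0.symm ψ, ?_⟩
      apply e1.injective
      rw [e1.apply_symm_apply]
      refine (dual_nat d (e0.symm ψ)).trans ?_
      exact congrArg (dlm C d) (e0.apply_symm_apply ψ)
  have hQC := TR.tensor hC Q
  have hP1C : TR C (dl C P1) := (TR.proj hC : TR C P1).dual
  apply enat_eq_of
  intro m
  rw [gcdim_le_iff, gcdim_le_iff]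
  exact ⟨gc_schanuel hC hLQC hNP hQC hP1C, gc_schanuel hC hNP hLQC hP1C hQC⟩

end
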